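/- (Proposition 1) Let M be the All Attack Structure constructed from plant G, supervisor S realized by H, and vulnerable events Σ_v. For every extended string h ∈ L_e(M), letting β = tam(h) and (q, q̃, z) = f(q₀, h), the current-state estimate of the supervisor on the doctored observation β equals the unobservable reach of q: E^C_{S/G}(β) = UR_{Δ_H(z)}(q). -/

import Mathlib

open scoped Classical

namespace DES

variable {X E Z : Type*}

/-- Run of a partial automaton on a string of events. -/
def runStr (δ : X → E → Option X) : X → List E → Option X
  | x, [] => some x
  | x, σ :: s => (δ x σ).bind fun y => runStr δ y s

/-- Open-loop language generated from a state. -/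
def LangFrom (δ : X → E → Option X) (x0 : X) : Set (List E) :=
  {s | (runStr δ x0 s).isSome}

/-- Open-loop language of the plant. -/
def Lang (δ : X → E → Option X) (X0 : Set X) : Set (List E) :=
  {s | ∃ x0 ∈ X0, s ∈ LangFrom δ x0}

/-- Natural projection erasing unobservable events. -/
noncomputable def proj (Eobs : Set E) (s : List E) : List E :=
  s.filter fun e => decide (e ∈ Eobs)

/-- Closed-loop language of `S/G` from initial state `x0`. -/
inductive CLLang (δ : X → E → Option X) (Eobs : Set E) (S : List E → Set E) (x0 : X) :
    List E → Prop
  | nil : CLLang δ Eobs S x0 []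
  | snoc (s : List E) (σ : E) : CLLang δ Eobs S x0 s →
      (runStr δ x0 (s ++ [σ])).isSome → σ ∈ S (proj Eobs s) → CLLang δ Eobs S x0 (s ++ [σ])

/-- Closed-loop language of `S/G`. -/
def CLLangAll (δ : X → E → Option X) (Eobs : Set E) (S : List E → Set E) (X0 : Set X) :
    Set (List E) := {s | ∃ x0 ∈ X0, CLLang δ Eobs S x0 s}

/-- Projection of a language. -/
def projSet (Eobs : Set E) (L : Set (List E)) : Set (List E) := proj Eobs '' L

/-- Current-state estimate of the closed-loop system. -/
def ECest (δ : X → E → Option X) (Eobs : Set E) (S : List E → Set E) (X0 : Set X)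
    (α : List E) : Set X :=
  {x | ∃ x0 ∈ X0, ∃ s, CLLang δ Eobs S x0 s ∧ proj Eobs s = α ∧ runStr δ x0 s = some x}

/-- Initial-state estimate of the closed-loop system. -/
def EIest (δ : X → E → Option X) (Eobs : Set E) (S : List E → Set E) (X0 : Set X)
    (α : List E) : Set X :=
  {x0 | x0 ∈ X0 ∧ ∃ s, CLLang δ Eobs S x0 s ∧ proj Eobs s = α}

/-- Unobservable reach of `q` under control decision `γ`. -/
def URset (δ : X → E → Option X) (Euo γ : Set E) (q : Set X) : Set X :=
  {y | ∃ x ∈ q, ∃ s : List E, (∀ e ∈ s, e ∈ Euo ∩ γ) ∧ runStr δ x s = some y}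

/-- Observable reach of `q` upon occurrence of `σ`. -/
def NXset (δ : X → E → Option X) (σ : E) (q : Set X) : Set X :=
  {y | ∃ x ∈ q, δ x σ = some y}

/-- Events that can be observed from `q` under control decision `γ`. -/
def Oset (δ : X → E → Option X) (Eobs Euo : Set E) (q : Set X) (γ : Set E) : Set E :=
  {σ | σ ∈ Eobs ∩ γ ∧ ∃ x ∈ q, ∃ w : List E, (∀ e ∈ w, e ∈ Euo ∩ γ) ∧
      (runStr δ x (w ++ [σ])).isSome}

/-- Transition function of the augmented system `~G`. -/
def augDelta (δ : X → E → Option X) : X × X → E → Option (X × X) :=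
  fun p σ => (δ p.2 σ).map fun y => (p.1, y)

/-- Initial states of the augmented system. -/
def augX0 (X0 : Set X) : Set (X × X) := {p | p.1 ∈ X0 ∧ p.2 = p.1}

/-- First components of a set of augmented states. -/
def Iset (qt : Set (X × X)) : Set X := Prod.fst '' qt

/-- Active events of the supervisor automaton `H` at state `z`. -/
def ΔH (ξ : Z → E → Option Z) (z : Z) : Set E := {σ | (ξ z σ).isSome}

/-- Active events at `some z`, and `∅` at the attack-detected state `z_att = none`. -/
def ΔHopt (ξ : Z → E → Option Z) : Option Z → Set E
  | some z => ΔH ξ z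
  | none => ∅

/-- `H = (Z, Σ, ξ, z₀)` realizes supervisor `S`. -/
def Realizes (ξ : Z → E → Option Z) (z0 : Z) (δ : X → E → Option X)
    (Eobs : Set E) (S : List E → Set E) (X0 : Set X) : Prop :=
  (∀ z σ z', ξ z σ = some z' → z' ≠ z → σ ∈ Eobs) ∧
  (∀ s ∈ CLLangAll δ Eobs S X0, ∃ z, runStr ξ z0 s = some z ∧ ΔH ξ z = S (proj Eobs s))

/-- Product automaton `G × H`. -/
def prodDelta (δ : X → E → Option X) (ξ : Z → E → Option Z) :
    X × Z → E → Option (X × Z) :=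
  fun p σ => (δ p.1 σ).bind fun x' => (ξ p.2 σ).map fun z' => (x', z')

/-- Environment states of the AAS: `(q, qt, z)` with `z = none` encoding `z_att`. -/
abbrev EnvState (X Z : Type*) := Set X × Set (X × X) × Option Z

/-- Attack states of the AAS: `(q, qt, z, σ)`. -/
abbrev AtkState (X Z E : Type*) := Set X × Set (X × X) × Z × E

/-- States of the AAS. -/
abbrev MState (X Z E : Type*) := EnvState X Z ⊕ AtkState X Z E

/-- Events of the AAS: `Sum.inl σ` is a genuine event, `Sum.inr (some σ)` is `σ̂`,
and `Sum.inr none` is `ε̂`. -/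
abbrev MEvent (E : Type*) := E ⊕ Option E

/-- Action space `V(σ)` of the attacker. -/
def Vmap (Ev : Set E) (σ : E) : Set (Option E) :=
  if σ ∈ Ev then {a | ∃ σ', a = some σ' ∧ σ' ∈ Ev} ∪ {none} else {some σ}

/-- Transition function of the All Attack Structure. -/
noncomputable def AASf (δ : X → E → Option X) (Eobs Euo Ev : Set E)
    (ξ : Z → E → Option Z) : MState X Z E → MEvent E → Option (MState X Z E)
  | Sum.inl (q, qt, some z), Sum.inl σ =>
      if σ ∈ Oset (augDelta δ) Eobs Euo qt (ΔH ξ z) then some (Sum.inr (q, qt, z, σ))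
      else none
  | Sum.inr (q, qt, z, σ), Sum.inr a =>
      if a ∈ Vmap Ev σ then
        let q' : Set X := match a with
          | some σa => NXset δ σa (URset δ Euo (ΔH ξ z) q)
          | none => URset δ Euo (ΔH ξ z) q
        let qt' : Set (X × X) := NXset (augDelta δ) σ (URset (augDelta δ) Euo (ΔH ξ z) qt)
        if q'.Nonempty then
          match a with
          | some σa => (ξ z σa).map fun z' => Sum.inl (q', qt', some z')
          | none => some (Sum.inl (q', qt', some z))
        else some (Sum.inl (q', qt', (none : Option Z)))
      else none
  | _, _ => none

/-- Initial state of the AAS. -/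
def AASq0 (X0 : Set X) (z0 : Z) : MState X Z E := Sum.inl (X0, augX0 X0, some z0)

/-- Actual observation of an extended string. -/
def obs : List (MEvent E) → List E :=
  List.filterMap fun e => match e with | Sum.inl σ => some σ | Sum.inr _ => none

/-- Tampered (doctored) observation of an extended string. -/
def tam : List (MEvent E) → List E :=
  List.filterMap fun e => match e with | Sum.inl _ => none | Sum.inr a => a

/-- `h` is an extended string of the structure with transition function `f`
ending at an environment state. -/
def LeM (f : MState X Z E → MEvent E → Option (MState X Z E)) (q0 : MState X Z E)
    (h : List (MEvent E)) : Prop :=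
  ∃ qe : EnvState X Z, runStr f q0 h = some (Sum.inl qe)

/-- `A` is an attacker (with `none` encoding `ε`). -/
def IsAttacker (δ : X → E → Option X) (Eobs Ev : Set E) (X0 : Set X)
    (A : List E → Option E) : Prop :=
  A [] = none ∧
  ∀ α σ, (α ++ [σ]) ∈ projSet Eobs (Lang δ X0) →
    (σ ∉ Ev → A (α ++ [σ]) = some σ) ∧ (σ ∈ Ev → A (α ++ [σ]) ∈ Vmap Ev σ)

/-- The string-modification map `g_A` induced by attacker `A`. -/
def gA (A : List E → Option E) (α : List E) : List E :=
  (List.range α.length).filterMap fun i => A (α.take (i + 1))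

/-- The extended string `α_A` determined by attacker `A` and observation `α`
(the first argument is the accumulated prefix). -/
def extStr (A : List E → Option E) : List E → List E → List (MEvent E)
  | _, [] => []
  | pre, σ :: rest =>
      Sum.inl σ :: Sum.inr (A (pre ++ [σ])) :: extStr A (pre ++ [σ]) rest

/-- Positive detected environment state. -/
def PosDet (Xsec : Set X) (qe : EnvState X Z) : Prop := Iset qe.2.1 ⊆ Xsec

/-- Negative detected environment state. -/
def NegDet (Xsec : Set X) (qe : EnvState X Z) : Prop := Iset qe.2.1 ∩ Xsec = ∅

/-- Undetectable environment state. -/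
def Undet (δ : X → E → Option X) (Euo : Set E) (ξ : Z → E → Option Z)
    (Xsec : Set X) (qe : EnvState X Z) : Prop :=
  (Iset qe.2.1 ∩ Xsec).Nonempty ∧
  ∀ p ∈ URset (augDelta δ) Euo (ΔHopt ξ qe.2.2) qe.2.1, p.1 ∈ Xsec →
    ∃ p' ∈ URset (augDelta δ) Euo (ΔHopt ξ qe.2.2) qe.2.1, p'.2 = p.2 ∧ p'.1 ∉ Xsec

/-- Transition function of the simplified AAS: all outgoing transitions from
detected and undetectable environment states are removed. -/
noncomputable def SAASf (δ : X → E → Option X) (Eobs Euo Ev : Set E)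
    (ξ : Z → E → Option Z) (Xsec : Set X) :
    MState X Z E → MEvent E → Option (MState X Z E) := fun st e =>
  match st with
  | Sum.inl qe =>
      if PosDet Xsec qe ∨ NegDet Xsec qe ∨ Undet δ Euo ξ Xsec qe then none
      else AASf δ Eobs Euo Ev ξ st e
  | Sum.inr _ => AASf δ Eobs Euo Ev ξ st e

/-- Reachability in a structure over AAS states. -/
def ReachableFrom (f : MState X Z E → MEvent E → Option (MState X Z E))
    (st st' : MState X Z E) : Prop := ∃ t, runStr f st t = some st'

/-- `fm` is (the transition function of) a single attack structure of the
simplified AAS. -/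
def IsSAS (δ : X → E → Option X) (Eobs Euo Ev : Set E) (ξ : Z → E → Option Z)
    (z0 : Z) (X0 Xsec : Set X)
    (fm : MState X Z E → MEvent E → Option (MState X Z E)) : Prop :=
  (∀ st e st', fm st e = some st' → SAASf δ Eobs Euo Ev ξ Xsec st e = some st') ∧
  (∀ qa : AtkState X Z E, ReachableFrom fm (AASq0 X0 z0) (Sum.inr qa) →
      ∃! e, (fm (Sum.inr qa) e).isSome = true) ∧
  (∀ qe : EnvState X Z, ReachableFrom fm (AASq0 X0 z0) (Sum.inl qe) →
      ∀ e, fm (Sum.inl qe) e = SAASf δ Eobs Euo Ev ξ Xsec (Sum.inl qe) e)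

/-- `Am` is the attack strategy induced by the single attack structure `fm`. -/
def InducedStrategy (δ : X → E → Option X) (Eobs : Set E) (X0 : Set X)
    (fm : MState X Z E → MEvent E → Option (MState X Z E)) (z0 : Z)
    (Am : List E → Option E) : Prop :=
  Am [] = none ∧
  ∀ α σ, (α ++ [σ]) ∈ projSet Eobs (Lang δ X0) →
    ((∀ h, LeM fm (AASq0 X0 z0) h → obs h ≠ α ++ [σ]) → Am (α ++ [σ]) = some σ) ∧
    (∀ h, LeM fm (AASq0 X0 z0) h → obs h = α ++ [σ] →
        h.getLast? = some (Sum.inr (Am (α ++ [σ]))))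

/-- Attacker `A` is IS-detectable. -/
def ISDetectable (δ : X → E → Option X) (Eobs : Set E) (S : List E → Set E)
    (X0 Xsec : Set X) (A : List E → Option E) : Prop :=
  ∃ α σ, σ ∈ Eobs ∧
    (α ++ [σ]) ∈ projSet Eobs (CLLangAll δ Eobs (fun β => S (gA A β)) X0) ∧
    (ECest δ Eobs S X0 (gA A α)).Nonempty ∧
    EIest δ Eobs (fun β => S (gA A β)) X0 (α ++ [σ]) ⊆ Xsec


/-! Helper -/

theorem runStr_append (δ : X → E → Option X) (s t : List E) (x : X) :
    runStr δ x (s ++ t) = (runStr δ x s).bind fun y => runStr δ y t := by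
  induction s generalizing x with
  | nil => rfl
  | cons a s ih =>
    simp only [List.cons_append, runStr]
    cases δ x a with
    | none => rfl
    | some y => simpa using ih y

theorem runStr_single (δ : X → E → Option X) (x : X) (σ : E) :
    runStr δ x [σ] = δ x σ := by
  simp only [runStr]
  cases δ x σ <;> rfl

theorem proj_append (Eobs : Set E) (s t : List E) :
    proj Eobs (s ++ t) = proj Eobs s ++ proj Eobs t := by
  simp [proj]

theorem cl_extend (δ : X → E → Option X) (Eobs Euo : Set E)
    (hpart : ∀ e, e ∈ Euo ↔ e ∉ Eobs) (S : List E → Set E) (x0 y : X) (t : List E) :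
    ∀ (s : List E) (x : X), CLLang δ Eobs S x0 s → runStr δ x0 s = some x →
      (∀ e ∈ t, e ∈ Euo ∩ S (proj Eobs s)) → runStr δ x t = some y →
      CLLang δ Eobs S x0 (s ++ t) ∧ proj Eobs (s ++ t) = proj Eobs s := by
  induction t with
  | nil => intro s x hs _ _ _; simpa using hs
  | cons a t ih =>
    intro s x hs hx ht hy
    obtain ⟨w, hw, hwy⟩ := Option.bind_eq_some_iff.1 hy
    have ha := ht a (by simp)
    have hrun : runStr δ x0 (s ++ [a]) = some w := by
      rw [runStr_append, hx]; simpa [runStr_single] using hw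
    have hp : proj Eobs (s ++ [a]) = proj Eobs s := by
      rw [proj_append]
      have := (hpart a).1 ha.1
      simp [proj, this]
    have := ih (s ++ [a]) w (CLLang.snoc s a hs (by simp [hrun]) ha.2) hrun
      (fun e he => by rw [hp]; exact ht e (by simp [he])) hwy
    rw [hp] at this
    simpa using this

/-- States reached right after the last observation. -/
def BaseSet (δ : X → E → Option X) (Eobs : Set E) (S : List E → Set E) (X0 : Set X)
    (β : List E) : Set X :=
  {w | (β = [] ∧ w ∈ X0) ∨ ∃ β' σ, β = β' ++ [σ] ∧ σ ∈ Eobs ∧ σ ∈ S β' ∧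
    ∃ y ∈ ECest δ Eobs S X0 β', δ y σ = some w}

theorem ECest_eq (δ : X → E → Option X) (Eobs Euo : Set E)
    (hpart : ∀ e, e ∈ Euo ↔ e ∉ Eobs) (S : List E → Set E) (X0 : Set X) (β : List E) :
    ECest δ Eobs S X0 β = URset δ Euo (S β) (BaseSet δ Eobs S X0 β) := by
  ext x
  constructor
  · rintro ⟨x0, hx0, s, hs, hp, hx⟩
    induction hs generalizing β x with
    | nil =>
      refine ⟨x, Or.inl ⟨by simpa [proj] using hp.symm, ?_⟩, [], by simp, rfl⟩
      simp only [runStr, Option.some.injEq] at hx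
      exact hx ▸ hx0
    | snoc s σ hs hr hσ ih =>
      rw [runStr_append] at hx
      obtain ⟨y, hy, hyx⟩ := Option.bind_eq_some_iff.1 hx
      rw [runStr_single] at hyx
      by_cases ho : σ ∈ Eobs
      · have hb : β = proj Eobs s ++ [σ] := by
          rw [← hp, proj_append]; simp [proj, ho]
        exact ⟨x, Or.inr ⟨proj Eobs s, σ, hb, ho, hσ, y, ⟨x0, hx0, s, hs, rfl, hy⟩, hyx⟩,
          [], by simp, rfl⟩
      · have hb : proj Eobs s = β := by
          rw [← hp, proj_append]; simp [proj, ho]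
        obtain ⟨w, hw, t, ht, hty⟩ := ih β y hb hy
        refine ⟨w, hw, t ++ [σ], ?_, ?_⟩
        · intro e he
          rcases List.mem_append.1 he with he | he
          · exact ht e he
          · rw [List.mem_singleton.1 he]
            exact ⟨(hpart σ).2 ho, hb ▸ hσ⟩
        · rw [runStr_append, hty]; simpa [runStr_single] using hyx
  · rintro ⟨w, hw, t, ht, htx⟩
    have key : ∃ x0 ∈ X0, ∃ s, CLLang δ Eobs S x0 s ∧ proj Eobs s = β ∧
        runStr δ x0 s = some w := by
      rcases hw with ⟨rfl, hw⟩ | ⟨β', σ, rfl, ho, hσ, y, ⟨x0, hx0, s, hs, hp, hy⟩, hyw⟩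
      · exact ⟨w, hw, [], CLLang.nil, rfl, rfl⟩
      · have hr : runStr δ x0 (s ++ [σ]) = some w := by
          rw [runStr_append, hy]; simpa [runStr_single] using hyw
        refine ⟨x0, hx0, s ++ [σ], CLLang.snoc s σ hs (by simp [hr]) (hp ▸ hσ), ?_, hr⟩
        rw [proj_append, hp]; simp [proj, ho]
    obtain ⟨x0, hx0, s, hs, rfl, hw'⟩ := key
    obtain ⟨h1, h2⟩ := cl_extend δ Eobs Euo hpart S x0 x t s w hs hw' ht htx
    refine ⟨x0, hx0, s ++ t, h1, h2, ?_⟩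
    rw [runStr_append, hw']; exact htx

theorem run_proj (ξ : Z → E → Option Z) (Eobs : Set E)
    (hl : ∀ z σ z', ξ z σ = some z' → z' ≠ z → σ ∈ Eobs) (s : List E) :
    ∀ z z', runStr ξ z s = some z' → runStr ξ z (proj Eobs s) = some z' := by
  induction s with
  | nil => intro z z' h; exact h
  | cons a s ih =>
    intro z z' h
    obtain ⟨w, hw, hwz⟩ := Option.bind_eq_some_iff.1 h
    by_cases ho : a ∈ Eobs
    · have : proj Eobs (a :: s) = a :: proj Eobs s := by simp [proj, ho]
      rw [this]
      exact Option.bind_eq_some_iff.2 ⟨w, hw, ih w z' hwz⟩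
    · have : proj Eobs (a :: s) = proj Eobs s := by simp [proj, ho]
      rw [this]
      have hwe : w = z := by
        by_contra hne
        exact ho (hl z a w hw hne)
      exact ih z z' (hwe ▸ hwz)

theorem S_eq (δ : X → E → Option X) (Eobs : Set E) (S : List E → Set E) (X0 : Set X)
    (ξ : Z → E → Option Z) (z0 : Z) (hreal : Realizes ξ z0 δ Eobs S X0) (β : List E) (z : Z)
    (hz : runStr ξ z0 β = some z) (hne : (ECest δ Eobs S X0 β).Nonempty) :
    S β = ΔH ξ z := by
  obtain ⟨x, x0, hx0, s, hs, rfl, hx⟩ := hne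
  obtain ⟨z', h1, h2⟩ := hreal.2 s ⟨x0, hx0, hs⟩
  have := run_proj ξ Eobs hreal.1 s z0 z' h1
  rw [hz, Option.some.injEq] at this
  rw [this, h2]

theorem UR_UR (δ : X → E → Option X) (Euo γ : Set E) (q : Set X) :
    URset δ Euo γ (URset δ Euo γ q) = URset δ Euo γ q := by
  ext y
  constructor
  · rintro ⟨x, ⟨w, hw, s, hs, hsx⟩, t, ht, hty⟩
    refine ⟨w, hw, s ++ t, ?_, ?_⟩
    · intro e he
      rcases List.mem_append.1 he with he | he
      · exact hs e he
      · exact ht e he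
    · rw [runStr_append, hsx]; exact hty
  · intro h
    exact ⟨y, h, [], by simp, rfl⟩

theorem UR_sub (δ : X → E → Option X) (Euo γ : Set E) (q : Set X) :
    q ⊆ URset δ Euo γ q := fun y h => ⟨y, h, [], by simp, rfl⟩

theorem UR_empty (δ : X → E → Option X) (Euo γ : Set E) :
    URset δ Euo γ (∅ : Set X) = ∅ := by
  ext y; simp [URset]

/-- Invariant along runs of the AAS. -/
def Inv (δ : X → E → Option X) (Eobs Euo : Set E) (S : List E → Set E) (X0 : Set X)
    (ξ : Z → E → Option Z) (z0 : Z) (β : List E) : MState X Z E → Prop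
  | Sum.inl (q, _, some z) =>
      ECest δ Eobs S X0 β = URset δ Euo (ΔH ξ z) q ∧ runStr ξ z0 β = some z
  | Sum.inl (q, _, none) => ECest δ Eobs S X0 β = URset δ Euo ∅ q
  | Sum.inr (q, _, z, σ) =>
      ECest δ Eobs S X0 β = URset δ Euo (ΔH ξ z) q ∧ runStr ξ z0 β = some z ∧ σ ∈ Eobs

theorem Base_snoc (δ : X → E → Option X) (Eobs : Set E) (S : List E → Set E) (X0 : Set X)
    (β : List E) (σ : E) (ho : σ ∈ Eobs) :
    BaseSet δ Eobs S X0 (β ++ [σ]) = {w | σ ∈ S β ∧ w ∈ NXset δ σ (ECest δ Eobs S X0 β)} := by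
  ext w
  constructor
  · rintro (⟨h, _⟩ | ⟨β', σ', h, h1, h2, h3⟩)
    · simp at h
    · obtain ⟨rfl, h⟩ := List.append_inj' h rfl
      obtain rfl : σ = σ' := by simpa using h
      exact ⟨h2, h3⟩
  · rintro ⟨h2, h3⟩
    exact Or.inr ⟨β, σ, rfl, ho, h2, h3⟩

theorem inv_step (δ : X → E → Option X)
    (Eobs Euo Ev : Set E) (hpart : ∀ e, e ∈ Euo ↔ e ∉ Eobs) (hv : Ev ⊆ Eobs)
    (S : List E → Set E) (X0 : Set X)
    (ξ : Z → E → Option Z) (z0 : Z) (hreal : Realizes ξ z0 δ Eobs S X0) (β : List E)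
    (st st' : MState X Z E) (e : MEvent E) (hi : Inv δ Eobs Euo S X0 ξ z0 β st)
    (hst : AASf δ Eobs Euo Ev ξ st e = some st') :
    Inv δ Eobs Euo S X0 ξ z0 (β ++ tam [e]) st' := by
  rcases st with ⟨q, qt, _ | z⟩ | ⟨q, qt, z, σ⟩
  · cases e <;> simp [AASf] at hst
  · rcases e with σ | a
    · simp only [AASf] at hst
      split_ifs at hst with ho
      cases hst
      simp only [tam, List.filterMap_cons, List.filterMap_nil, List.append_nil]
      exact ⟨hi.1, hi.2, ho.1.1⟩
    · simp [AASf] at hst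
  · obtain ⟨h1, h2, h3⟩ := hi
    rcases e with σ' | _ | σa
    · simp [AASf] at hst
    · simp only [AASf] at hst
      simp only [tam, List.filterMap_cons, List.filterMap_nil, List.append_nil]
      split_ifs at hst with ha hne
      · cases hst
        exact ⟨by rw [UR_UR]; exact h1, h2⟩
      · cases hst
        rw [Set.not_nonempty_iff_eq_empty] at hne
        show ECest δ Eobs S X0 β = URset δ Euo ∅ _
        rw [hne, UR_empty, h1, hne]
    · simp only [AASf] at hst
      simp only [tam, List.filterMap_cons, List.filterMap_nil]
      split_ifs at hst with ha hne
      · have ho : σa ∈ Eobs := by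
          unfold Vmap at ha
          split_ifs at ha with hh
          · have : σa ∈ Ev := by simpa using ha
            exact hv this
          · have : σa = σ := by simpa using ha
            exact this ▸ h3
        obtain ⟨z', hz', hst⟩ := Option.map_eq_some_iff.1 hst
        subst hst
        have hr : runStr ξ z0 (β ++ [σa]) = some z' := by
          rw [runStr_append, h2]; simpa [runStr_single] using hz'
        have hneE : (ECest δ Eobs S X0 β).Nonempty := by
          obtain ⟨w, y, hy, _⟩ := hne
          exact ⟨y, h1 ▸ hy⟩
        have hS := S_eq δ Eobs S X0 ξ z0 hreal β z h2 hneE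
        have hB : BaseSet δ Eobs S X0 (β ++ [σa]) =
            NXset δ σa (URset δ Euo (ΔH ξ z) q) := by
          rw [Base_snoc δ Eobs S X0 β σa ho, hS, h1]
          have : σa ∈ ΔH ξ z := by simp [ΔH, hz']
          simp [this]
        have hE := ECest_eq δ Eobs Euo hpart S X0 (β ++ [σa])
        rw [hB] at hE
        have hS' := S_eq δ Eobs S X0 ξ z0 hreal (β ++ [σa]) z' hr
          (by rw [hE]; exact hne.mono (UR_sub _ _ _ _))
        rw [hS'] at hE
        exact ⟨hE, hr⟩
      · have ho : σa ∈ Eobs := by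
          unfold Vmap at ha
          split_ifs at ha with hh
          · have : σa ∈ Ev := by simpa using ha
            exact hv this
          · have : σa = σ := by simpa using ha
            exact this ▸ h3
        cases hst
        rw [Set.not_nonempty_iff_eq_empty] at hne
        show ECest δ Eobs S X0 (β ++ [σa]) = URset δ Euo ∅ _
        rw [hne, UR_empty, ECest_eq δ Eobs Euo hpart, Base_snoc δ Eobs S X0 β σa ho, h1, hne]
        simp [UR_empty]

theorem inv_run (δ : X → E → Option X)
    (Eobs Euo Ev : Set E) (hpart : ∀ e, e ∈ Euo ↔ e ∉ Eobs) (hv : Ev ⊆ Eobs)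
    (S : List E → Set E) (X0 : Set X)
    (ξ : Z → E → Option Z) (z0 : Z) (hreal : Realizes ξ z0 δ Eobs S X0)
    (h : List (MEvent E)) : ∀ (β : List E) (st st' : MState X Z E),
    Inv δ Eobs Euo S X0 ξ z0 β st → runStr (AASf δ Eobs Euo Ev ξ) st h = some st' →
    Inv δ Eobs Euo S X0 ξ z0 (β ++ tam h) st' := by
  induction h with
  | nil =>
    intro β st st' hi hr
    simp only [runStr, Option.some.injEq] at hr
    subst hr
    simpa [tam] using hi
  | cons e h ih =>
    intro β st st' hi hr
    obtain ⟨st1, hs, hr⟩ := Option.bind_eq_some_iff.1 hr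
    have := ih _ _ _ (inv_step δ Eobs Euo Ev hpart hv S X0 ξ z0 hreal β st st1 e hi hs) hr
    have he : tam (e :: h) = tam [e] ++ tam h := by
      unfold tam
      rw [← List.filterMap_append]; rfl
    rw [he, ← List.append_assoc]; exact this

/-! ## STATEMENT 6 (Proposition 1) -/
theorem stmt6 [Fintype X] [Fintype E] [Fintype Z] (δ : X → E → Option X)
    (Eobs Euo Ev : Set E) (hpart : ∀ e, e ∈ Euo ↔ e ∉ Eobs) (hv : Ev ⊆ Eobs)
    (Euc : Set E) (S : List E → Set E) (hΓ : ∀ α, Euc ⊆ S α) (X0 : Set X)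
    (ξ : Z → E → Option Z) (z0 : Z) (hreal : Realizes ξ z0 δ Eobs S X0)
    (h : List (MEvent E)) (q : Set X) (qt : Set (X × X)) (zo : Option Z)
    (hrun : runStr (AASf δ Eobs Euo Ev ξ) (AASq0 X0 z0) h = some (Sum.inl (q, qt, zo))) :
    ECest δ Eobs S X0 (tam h) = URset δ Euo (ΔHopt ξ zo) q := by
  have h0 : Inv δ Eobs Euo S X0 ξ z0 [] (AASq0 X0 z0) := by
    refine ⟨?_, rfl⟩
    have hB : BaseSet δ Eobs S X0 [] = X0 := by
      ext w; simp [BaseSet]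
    have hE := ECest_eq δ Eobs Euo hpart S X0 []
    rw [hB] at hE
    rcases X0.eq_empty_or_nonempty with he | hne
    · rw [hE, he, UR_empty, UR_empty]
    · rw [S_eq δ Eobs S X0 ξ z0 hreal [] z0 rfl
        (by rw [hE]; exact hne.mono (UR_sub _ _ _ _))] at hE
      exact hE
  have := inv_run δ Eobs Euo Ev hpart hv S X0 ξ z0 hreal h [] _ _ h0 hrun
  cases zo with
  | none => exact this
  | some z => exact this.1

end DES
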